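/- arXiv:2412.15078 — 5 statements merged into one kernel-verified Lean document; each statement's English description precedes it below -/
import Mathlib

section
/- Suppose there exist symmetric positive definite matrix-valued sequences P1(h,k) (of size n1×n1) and P2(h,k) (of size n2×n2), defined for all (h,k) with 0 ≤ h ≤ N1+1 and 0 ≤ k ≤ N2+1, such that, writing P(h,k) = diag(P1(h,k), P2(h,k)) and P⁺(h,k) = diag(P1(h+1,k), P2(h,k+1)): (i) A(h,k)ᵀ P⁺(h,k) A(h,k) − P(h,k) is negative definite for all (h,k) ∈ {0,…,N1}×{0,…,N2}; (ii) P(h,k) − Γ(h,k) is positive definite for all (h,k) ∈ {0,…,N1}×{0,…,N2}; (iii) R1(k) − P1(0,k) is positive semidefinite for all k ∈ {0,…,N2}; (iv) R2(h) − P2(h,0) is positive semidefinite for all h ∈ {0,…,N1}. Then the 2D Roesser system with system matrix A(h,k) is finite-region stable with respect to ({0,…,N1}×{0,…,N2}, R(h,k), Γ(h,k)), i.e., every solution whose initial data satisfy Σ_{k=0}^{N2} x1(0,k)ᵀ R1(k) x1(0,k) + Σ_{h=0}^{N1} x2(h,0)ᵀ R2(h) x2(h,0) ≤ 1 also satisfies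 x1(h,k)ᵀ Γ1(h,k) x1(h,k) + x2(h,k)ᵀ Γ2(h,k) x2(h,k) < 1 for all (h,k) ∈ {0,…,N1}×{0,…,N2}. -/
open Matrix

/-- A real square matrix is negative definite if `xᵀ M x < 0` for all `x ≠ 0`. -/
def NegDef {n : Type*} [Fintype n] (M : Matrix n n ℝ) : Prop :=
  ∀ x : n → ℝ, x ≠ 0 → x ⬝ᵥ (M *ᵥ x) < 0

lemma frs_scalar {N1 N2 : ℕ} (a b : ℕ → ℕ → ℝ)
    (ha : ∀ h k, h ≤ N1 + 1 → k ≤ N2 + 1 → 0 ≤ a h k)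
    (hb : ∀ h k, h ≤ N1 + 1 → k ≤ N2 + 1 → 0 ≤ b h k)
    (hstep : ∀ h k, h ≤ N1 → k ≤ N2 → a (h+1) k + b h (k+1) ≤ a h k + b h k)
    (hinit : (∑ k ∈ Finset.range (N2+1), a 0 k) + (∑ h ∈ Finset.range (N1+1), b h 0) ≤ 1)
    (h k : ℕ) (hh : h ≤ N1) (hk : k ≤ N2) : a h k + b h k ≤ 1 := by
  have col : ∀ h, h ≤ N1 → ∀ m, m ≤ N2 + 1 →
      (∑ j ∈ Finset.range m, a (h+1) j) + b h m ≤ (∑ j ∈ Finset.range m, a h j) + b h 0 := by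
    intro h hh m
    induction m with
    | zero => intro _; simp
    | succ m ih =>
      intro hm
      have h1 := ih (by omega)
      have h2 := hstep h m hh (by omega)
      rw [Finset.sum_range_succ, Finset.sum_range_succ]
      linarith
  have row : ∀ m, m ≤ N2 + 1 → ∀ h, h ≤ N1 + 1 →
      (∑ j ∈ Finset.range m, a h j) ≤
        (∑ j ∈ Finset.range m, a 0 j) + ∑ i ∈ Finset.range h, b i 0 := by
    intro m hm h
    induction h with
    | zero => intro _; simp
    | succ h ih =>
      intro hh
      have h1 := ih (by omega)
      have h2 := col h (by omega) m hm
      have h3 := hb h m (by omega) hm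
      rw [Finset.sum_range_succ]
      linarith
  have h1 := row (k+1) (by omega) h (by omega)
  have h2 := col h hh k (by omega)
  have h3 : 0 ≤ ∑ j ∈ Finset.range k, a (h+1) j := by
    refine Finset.sum_nonneg fun j hj => ha _ _ (by omega) ?_
    have := Finset.mem_range.1 hj
    omega
  have h4 : ∑ j ∈ Finset.range (k+1), a 0 j ≤ ∑ j ∈ Finset.range (N2+1), a 0 j := by
    refine Finset.sum_le_sum_of_subset_of_nonneg
      (Finset.range_subset_range.2 (by omega)) fun j hj _ => ha _ _ (by omega) ?_
    have := Finset.mem_range.1 hj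
    omega
  have h5 : ∑ i ∈ Finset.range (h+1), b i 0 ≤ ∑ i ∈ Finset.range (N1+1), b i 0 := by
    refine Finset.sum_le_sum_of_subset_of_nonneg
      (Finset.range_subset_range.2 (by omega)) fun j hj _ => hb _ _ ?_ (by omega)
    have := Finset.mem_range.1 hj
    omega
  rw [Finset.sum_range_succ] at h1
  rw [Finset.sum_range_succ] at h5
  linarith

lemma quad_blocks {n1 n2 : ℕ} (M : Matrix (Fin n1) (Fin n1) ℝ) (N : Matrix (Fin n2) (Fin n2) ℝ)
    (u : Fin n1 → ℝ) (v : Fin n2 → ℝ) :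
    Sum.elim u v ⬝ᵥ (Matrix.fromBlocks M 0 0 N *ᵥ Sum.elim u v) =
      u ⬝ᵥ (M *ᵥ u) + v ⬝ᵥ (N *ᵥ v) := by
  simp [Matrix.fromBlocks_mulVec, sumElim_dotProduct_sumElim]

/-- **Sufficient condition for finite-region stability of 2D Roesser systems.**
If there exist symmetric positive definite matrix-valued sequences `P1(h,k)`, `P2(h,k)`
(defined and positive definite for `0 ≤ h ≤ N1+1`, `0 ≤ k ≤ N2+1`) such that
(i) `A(h,k)ᵀ P⁺(h,k) A(h,k) − P(h,k) < 0` on `{0,…,N1}×{0,…,N2}`,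
(ii) `P(h,k) > Γ(h,k)` on `{0,…,N1}×{0,…,N2}`,
(iii) `P1(0,k) ≤ R1(k)` for `k ∈ {0,…,N2}`,
(iv) `P2(h,0) ≤ R2(h)` for `h ∈ {0,…,N1}`,
then the 2D Roesser system is finite-region stable w.r.t.
`({0,…,N1}×{0,…,N2}, diag(R1,R2), diag(Γ1,Γ2))`. -/
theorem frs_sufficient_condition
    {n1 n2 N1 N2 : ℕ} (hN1pos : 0 < N1) (hN12 : N1 < N2)
    (A11 : ℕ → ℕ → Matrix (Fin n1) (Fin n1) ℝ)
    (A12 : ℕ → ℕ → Matrix (Fin n1) (Fin n2) ℝ)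
    (A21 : ℕ → ℕ → Matrix (Fin n2) (Fin n1) ℝ)
    (A22 : ℕ → ℕ → Matrix (Fin n2) (Fin n2) ℝ)
    (R1 : ℕ → Matrix (Fin n1) (Fin n1) ℝ)
    (R2 : ℕ → Matrix (Fin n2) (Fin n2) ℝ)
    (Γ1 : ℕ → ℕ → Matrix (Fin n1) (Fin n1) ℝ)
    (Γ2 : ℕ → ℕ → Matrix (Fin n2) (Fin n2) ℝ)
    (hR1 : ∀ k, (R1 k).PosDef) (hR2 : ∀ h, (R2 h).PosDef)
    (hΓ1 : ∀ h k, (Γ1 h k).PosDef) (hΓ2 : ∀ h k, (Γ2 h k).PosDef)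
    (hΓR : (Matrix.fromBlocks (R1 0 - Γ1 0 0) 0 0 (R2 0 - Γ2 0 0)).PosDef)
    (P1 : ℕ → ℕ → Matrix (Fin n1) (Fin n1) ℝ)
    (P2 : ℕ → ℕ → Matrix (Fin n2) (Fin n2) ℝ)
    (hP1 : ∀ h k, h ≤ N1 + 1 → k ≤ N2 + 1 → (P1 h k).PosDef)
    (hP2 : ∀ h k, h ≤ N1 + 1 → k ≤ N2 + 1 → (P2 h k).PosDef)
    -- (i) the difference LMI
    (hDLMI : ∀ h k, h ≤ N1 → k ≤ N2 →
      NegDef ((Matrix.fromBlocks (A11 h k) (A12 h k) (A21 h k) (A22 h k))ᵀ *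
          Matrix.fromBlocks (P1 (h+1) k) 0 0 (P2 h (k+1)) *
          Matrix.fromBlocks (A11 h k) (A12 h k) (A21 h k) (A22 h k) -
          Matrix.fromBlocks (P1 h k) 0 0 (P2 h k)))
    -- (ii) `P(h,k) − Γ(h,k)` positive definite
    (hPΓ : ∀ h k, h ≤ N1 → k ≤ N2 →
      (Matrix.fromBlocks (P1 h k - Γ1 h k) 0 0 (P2 h k - Γ2 h k)).PosDef)
    -- (iii) `R1(k) − P1(0,k)` positive semidefinite
    (hP1R : ∀ k, k ≤ N2 → (R1 k - P1 0 k).PosSemidef)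
    -- (iv) `R2(h) − P2(h,0)` positive semidefinite
    (hP2R : ∀ h, h ≤ N1 → (R2 h - P2 h 0).PosSemidef)
    -- any solution of the 2D Roesser system
    (x1 : ℕ → ℕ → Fin n1 → ℝ) (x2 : ℕ → ℕ → Fin n2 → ℝ)
    (hdyn1 : ∀ h k, x1 (h+1) k = A11 h k *ᵥ x1 h k + A12 h k *ᵥ x2 h k)
    (hdyn2 : ∀ h k, x2 h (k+1) = A21 h k *ᵥ x1 h k + A22 h k *ᵥ x2 h k)
    -- whose initial data satisfy the weighted bound
    (hinit : (∑ k ∈ Finset.range (N2+1), x1 0 k ⬝ᵥ (R1 k *ᵥ x1 0 k)) +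
             (∑ h ∈ Finset.range (N1+1), x2 h 0 ⬝ᵥ (R2 h *ᵥ x2 h 0)) ≤ 1) :
    ∀ h k, h ≤ N1 → k ≤ N2 →
      x1 h k ⬝ᵥ (Γ1 h k *ᵥ x1 h k) + x2 h k ⬝ᵥ (Γ2 h k *ᵥ x2 h k) < 1 := by
  intro h k hh hk
  have key : x1 h k ⬝ᵥ (P1 h k *ᵥ x1 h k) + x2 h k ⬝ᵥ (P2 h k *ᵥ x2 h k) ≤ 1 := by
    refine frs_scalar (N1 := N1) (N2 := N2) (fun h k => x1 h k ⬝ᵥ (P1 h k *ᵥ x1 h k))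
      (fun h k => x2 h k ⬝ᵥ (P2 h k *ᵥ x2 h k)) ?_ ?_ ?_ ?_ h k hh hk
    · intro h k hh hk
      simpa using (hP1 h k hh hk).posSemidef.dotProduct_mulVec_nonneg (x1 h k)
    · intro h k hh hk
      simpa using (hP2 h k hh hk).posSemidef.dotProduct_mulVec_nonneg (x2 h k)
    · intro h k hh hk
      have e : Sum.elim (x1 (h+1) k) (x2 h (k+1)) =
          Matrix.fromBlocks (A11 h k) (A12 h k) (A21 h k) (A22 h k) *ᵥ
            Sum.elim (x1 h k) (x2 h k) := by
        rw [Matrix.fromBlocks_mulVec, hdyn1, hdyn2]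
        simp
      have h1 := quad_blocks (P1 (h+1) k) (P2 h (k+1)) (x1 (h+1) k) (x2 h (k+1))
      have h2 := quad_blocks (P1 h k) (P2 h k) (x1 h k) (x2 h k)
      show x1 (h+1) k ⬝ᵥ (P1 (h+1) k *ᵥ x1 (h+1) k) + x2 h (k+1) ⬝ᵥ (P2 h (k+1) *ᵥ x2 h (k+1))
        ≤ x1 h k ⬝ᵥ (P1 h k *ᵥ x1 h k) + x2 h k ⬝ᵥ (P2 h k *ᵥ x2 h k)
      rw [← h1, ← h2, e]
      by_cases hz : Sum.elim (x1 h k) (x2 h k) = 0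
      · rw [hz]; simp
      · have h3 := hDLMI h k hh hk _ hz
        rw [Matrix.sub_mulVec, dotProduct_sub, ← Matrix.mulVec_mulVec, ← Matrix.mulVec_mulVec,
          Matrix.dotProduct_mulVec _ (_ᵀ), Matrix.vecMul_transpose] at h3
        linarith
    · refine le_trans (add_le_add (Finset.sum_le_sum fun j hj => ?_)
        (Finset.sum_le_sum fun j hj => ?_)) hinit
      · have := (hP1R j (by have := Finset.mem_range.1 hj; omega)).dotProduct_mulVec_nonneg (x1 0 j)
        rw [Matrix.sub_mulVec, dotProduct_sub] at this
        simpa using this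
      · have := (hP2R j (by have := Finset.mem_range.1 hj; omega)).dotProduct_mulVec_nonneg (x2 j 0)
        rw [Matrix.sub_mulVec, dotProduct_sub] at this
        simpa using this
  by_cases hz : Sum.elim (x1 h k) (x2 h k) = 0
  · have z1 : x1 h k = 0 := by
      ext i; exact congrFun hz (Sum.inl i)
    have z2 : x2 h k = 0 := by
      ext i; exact congrFun hz (Sum.inr i)
    rw [z1, z2]; simp
  · have h3 := (hPΓ h k hh hk).dotProduct_mulVec_pos hz
    rw [star_trivial, quad_blocks, Matrix.sub_mulVec, Matrix.sub_mulVec, dotProduct_sub,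
      dotProduct_sub] at h3
    linarith
end

section
/- Let N1 be a positive integer and let V1, V2 : ℕ×ℕ → ℝ satisfy V1(h+1,k) + V2(h,k+1) < V1(h,k) + V2(h,k) for all (h,k) with h + k ≤ N1 − 1. Then for every M with 0 < M ≤ N1, writing V(h,k) = V1(h,k) + V2(h,k), one has Σ_{h=0}^{M} V(h, M−h) < Σ_{k=0}^{M} V1(0,k) + Σ_{h=0}^{M} V2(h,0). -/
/-- Case a) of the FRS proof: if `V1(h+1,k) + V2(h,k+1) < V1(h,k) + V2(h,k)` for all
`(h,k)` with `h + k ≤ N1 − 1`, then for every `M` with `0 < M ≤ N1` the anti-diagonal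
sum of `V = V1 + V2` satisfies
`Σ_{h=0}^{M} V(h, M−h) < Σ_{k=0}^{M} V1(0,k) + Σ_{h=0}^{M} V2(h,0)`. -/
theorem antidiagonal_sum_case_a (N1 : ℕ) (hN1 : 0 < N1) (V1 V2 : ℕ → ℕ → ℝ)
    (hdec : ∀ h k, h + k < N1 →
      V1 (h+1) k + V2 h (k+1) < V1 h k + V2 h k) :
    ∀ M, 0 < M → M ≤ N1 →
      ∑ h ∈ Finset.range (M+1), (V1 h (M-h) + V2 h (M-h)) <
        (∑ k ∈ Finset.range (M+1), V1 0 k) +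
          ∑ h ∈ Finset.range (M+1), V2 h 0 := by
  have step : ∀ M, M < N1 →
      ∑ h ∈ Finset.range (M+1+1), (V1 h (M+1-h) + V2 h (M+1-h)) <
        ∑ h ∈ Finset.range (M+1), (V1 h (M-h) + V2 h (M-h)) + V1 0 (M+1) + V2 (M+1) 0 := by
    intro M hM
    have e1 : ∑ h ∈ Finset.range (M+1+1), V1 h (M+1-h) =
        ∑ h ∈ Finset.range (M+1), V1 (h+1) (M-h) + V1 0 (M+1) := by
      rw [Finset.sum_range_succ']
      simp
    have e2 : ∑ h ∈ Finset.range (M+1+1), V2 h (M+1-h) =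
        ∑ h ∈ Finset.range (M+1), V2 h (M-h+1) + V2 (M+1) 0 := by
      rw [Finset.sum_range_succ, Nat.sub_self]
      congr 1
      refine Finset.sum_congr rfl fun h hh => ?_
      have := Finset.mem_range.1 hh
      rw [show M + 1 - h = M - h + 1 by omega]
    have e3 : ∑ h ∈ Finset.range (M+1), (V1 (h+1) (M-h) + V2 h (M-h+1)) <
        ∑ h ∈ Finset.range (M+1), (V1 h (M-h) + V2 h (M-h)) := by
      refine Finset.sum_lt_sum_of_nonempty ⟨0, by simp⟩ fun h hh => ?_
      have := Finset.mem_range.1 hh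
      exact hdec h (M-h) (by omega)
    rw [Finset.sum_add_distrib] at e3
    rw [Finset.sum_add_distrib, e1, e2]
    linarith
  intro M hM
  induction M, hM using Nat.le_induction with
  | base =>
    intro h
    have := step 0 h
    simp [Finset.sum_range_succ] at this ⊢
    linarith
  | succ M hM ih =>
    intro h
    have h1 := step M (by omega)
    have h2 := ih (by omega)
    rw [Finset.sum_range_succ (fun k => V1 0 k) (M+1),
      Finset.sum_range_succ (fun k => V2 k 0) (M+1)]
    linarith
end

section
/- Let N1 < N2 be positive integers and let V1, V2 : ℕ×ℕ → ℝ satisfy: (i) V1(h+1,k) + V2(h,k+1) < V1(h,k) + V2(h,k) for all (h,k) with 0 ≤ h ≤ N1, 0 ≤ k ≤ N2 − 1 and h + k ≤ N2 − 1; (ii) V1(N1+1, k) ≥ 0 for all k ∈ {0,…,N2−1}. Then for every M with N1 < M ≤ N2, writing V(h,k) = V1(h,k) + V2(h,k), one has Σ_{h=0}^{N1} V(h, M−h) < Σ_{k=0}^{M} V1(0,k) + Σ_{h=0}^{N1} V2(h,0). -/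
/-- Case b) of the FRS proof: let `N1 < N2`, suppose the one-step Lyapunov decrease
holds for `0 ≤ h ≤ N1`, `0 ≤ k ≤ N2 − 1`, `h + k ≤ N2 − 1`, and
`V1(N1+1, k) ≥ 0` for `k ∈ {0,…,N2−1}`. Then for every `M` with `N1 < M ≤ N2`,
`Σ_{h=0}^{N1} V(h, M−h) < Σ_{k=0}^{M} V1(0,k) + Σ_{h=0}^{N1} V2(h,0)`,
where `V = V1 + V2`. -/
theorem antidiagonal_sum_case_b (N1 N2 : ℕ) (hN1 : 0 < N1) (hN12 : N1 < N2)
    (V1 V2 : ℕ → ℕ → ℝ)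
    (hdec : ∀ h k, h ≤ N1 → k < N2 → h + k < N2 →
      V1 (h+1) k + V2 h (k+1) < V1 h k + V2 h k)
    (hnn : ∀ k, k < N2 → 0 ≤ V1 (N1+1) k) :
    ∀ M, N1 < M → M ≤ N2 →
      ∑ h ∈ Finset.range (N1+1), (V1 h (M-h) + V2 h (M-h)) <
        (∑ k ∈ Finset.range (M+1), V1 0 k) +
          ∑ h ∈ Finset.range (N1+1), V2 h 0 := by
  intro M hM hMN
  have row : ∀ h, h ≤ N1 → ∀ m, h + m ≤ N2 →
      (∑ k ∈ Finset.range m, V1 (h+1) k) + V2 h m ≤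
        (∑ k ∈ Finset.range m, V1 h k) + V2 h 0 := by
    intro h hh m
    induction m with
    | zero => intro _; simp
    | succ m ih =>
      intro hm
      have h1 := ih (by omega)
      have h2 := hdec h m hh (by omega) (by omega)
      rw [Finset.sum_range_succ, Finset.sum_range_succ]
      linarith
  have key : ∀ n, n ≤ N1 →
      (∑ h ∈ Finset.range n, (V1 h (M-h) + V2 h (M-h))) +
        (∑ k ∈ Finset.range (M-n+1), V1 n k) ≤
      (∑ k ∈ Finset.range (M+1), V1 0 k) + ∑ h ∈ Finset.range n, V2 h 0 := by
    intro n
    induction n with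
    | zero => intro _; simp
    | succ n ih =>
      intro hn
      have h1 := ih (by omega)
      have h2 := row n (by omega) (M-n) (by omega)
      rw [Finset.sum_range_succ _ (M-n)] at h1
      rw [show M - (n+1) + 1 = M - n by omega, Finset.sum_range_succ _ n,
        Finset.sum_range_succ _ n]
      linarith
  have h1 := key N1 le_rfl
  obtain ⟨m, hm⟩ : ∃ m, M - N1 = m + 1 := ⟨M - N1 - 1, by omega⟩
  have h2 := row N1 le_rfl m (by omega)
  have h3 := hdec N1 m le_rfl (by omega) (by omega)
  have h4 : 0 ≤ ∑ k ∈ Finset.range (m+1), V1 (N1+1) k :=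
    Finset.sum_nonneg fun k hk => hnn k (by have := Finset.mem_range.1 hk; omega)
  rw [hm, Finset.sum_range_succ _ (m+1), Finset.sum_range_succ _ m] at h1
  rw [Finset.sum_range_succ _ m] at h4
  rw [Finset.sum_range_succ _ N1, Finset.sum_range_succ _ N1, hm]
  linarith
end

section
/- Let N1 < N2 be positive integers and let V1, V2 : ℕ×ℕ → ℝ satisfy: (i) V1(h+1,k) + V2(h,k+1) < V1(h,k) + V2(h,k) for all (h,k) with 0 ≤ h ≤ N1, 0 ≤ k ≤ N2 and h + k ≤ N1 + N2 − 1; (ii) V1(N1+1, k) ≥ 0 for all k ∈ {0,…,N2}; (iii) V2(h, N2+1) ≥ 0 for all h ∈ {0,…,N1−1}. Then for every M with N2 < M ≤ N1 + N2, writing V(h,k) = V1(h,k) + V2(h,k), one has Σ_{h=M−N2}^{N1} V(h, M−h) < Σ_{k=0}^{N2} V1(0,k) + Σ_{h=0}^{N1} V2(h,0). -/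
lemma tele_aux (f : ℕ → ℝ) (k M : ℕ) (hk : k ≤ M) (n : ℕ) :
    ∑ h ∈ Finset.range n, (if h + k < M then f h - f (h+1) else 0) = f 0 - f (min n (M-k)) := by
  induction n with
  | zero => simp
  | succ n ih =>
    rw [Finset.sum_range_succ, ih]
    split_ifs with hc
    · rw [min_eq_left (by omega), min_eq_left (by omega)]; ring
    · rw [min_eq_right (by omega), min_eq_right (by omega)]; ring

/-- Case c) of the FRS proof: let `N1 < N2`, suppose the one-step Lyapunov decrease
holds for `0 ≤ h ≤ N1`, `0 ≤ k ≤ N2`, `h + k ≤ N1 + N2 − 1`, that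
`V1(N1+1, k) ≥ 0` for `k ∈ {0,…,N2}` and `V2(h, N2+1) ≥ 0` for `h ∈ {0,…,N1−1}`.
Then for every `M` with `N2 < M ≤ N1 + N2`,
`Σ_{h=M−N2}^{N1} V(h, M−h) < Σ_{k=0}^{N2} V1(0,k) + Σ_{h=0}^{N1} V2(h,0)`,
where `V = V1 + V2`. -/
theorem antidiagonal_sum_case_c (N1 N2 : ℕ) (hN1 : 0 < N1) (hN12 : N1 < N2)
    (V1 V2 : ℕ → ℕ → ℝ)
    (hdec : ∀ h k, h ≤ N1 → k ≤ N2 → h + k < N1 + N2 →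
      V1 (h+1) k + V2 h (k+1) < V1 h k + V2 h k)
    (hnn1 : ∀ k, k ≤ N2 → 0 ≤ V1 (N1+1) k)
    (hnn2 : ∀ h, h < N1 → 0 ≤ V2 h (N2+1)) :
    ∀ M, N2 < M → M ≤ N1 + N2 →
      ∑ h ∈ Finset.Icc (M-N2) N1, (V1 h (M-h) + V2 h (M-h)) <
        (∑ k ∈ Finset.range (N2+1), V1 0 k) +
          ∑ h ∈ Finset.range (N1+1), V2 h 0 := by
  intro M hM hM'
  have key : 0 < ∑ h ∈ Finset.range (N1+1), ∑ k ∈ Finset.range (N2+1),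
      ((if h + k < M then V1 h k - V1 (h+1) k else 0) +
        (if k + h < M then V2 h k - V2 h (k+1) else 0)) := by
    have hnn : ∀ h ∈ Finset.range (N1+1), ∀ k ∈ Finset.range (N2+1),
        0 ≤ ((if h + k < M then V1 h k - V1 (h+1) k else 0) +
        (if k + h < M then V2 h k - V2 h (k+1) else 0)) := by
      intro h hh k hk
      rw [Finset.mem_range] at hh hk
      rw [add_comm k h]
      split_ifs with hc
      · have := hdec h k (by omega) (by omega) (by omega)
        linarith
      · simp
    refine Finset.sum_pos' (fun h hh => Finset.sum_nonneg (hnn h hh)) ⟨0, by simp, ?_⟩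
    refine Finset.sum_pos' (hnn 0 (by simp)) ⟨0, by simp, ?_⟩
    have := hdec 0 0 (by omega) (by omega) (by omega)
    rw [if_pos (by omega), if_pos (by omega)]
    linarith
  simp only [Finset.sum_add_distrib] at key
  rw [Finset.sum_comm] at key
  have e1 : ∀ k ∈ Finset.range (N2+1), ∑ h ∈ Finset.range (N1+1),
      (if h + k < M then V1 h k - V1 (h+1) k else 0) = V1 0 k - V1 (min (N1+1) (M-k)) k := by
    intro k hk
    rw [Finset.mem_range] at hk
    exact tele_aux (fun h => V1 h k) k M (by omega) (N1+1)
  have e2 : ∀ h ∈ Finset.range (N1+1), ∑ k ∈ Finset.range (N2+1),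
      (if k + h < M then V2 h k - V2 h (k+1) else 0) = V2 h 0 - V2 h (min (N2+1) (M-h)) := by
    intro h hh
    rw [Finset.mem_range] at hh
    exact tele_aux (fun k => V2 h k) h M (by omega) (N2+1)
  rw [Finset.sum_congr rfl e1, Finset.sum_congr rfl e2, Finset.sum_sub_distrib,
    Finset.sum_sub_distrib] at key
  have b1 : ∑ h ∈ Finset.Icc (M-N2) N1, V1 h (M-h) ≤
      ∑ k ∈ Finset.range (N2+1), V1 (min (N1+1) (M-k)) k := by
    have : ∑ h ∈ Finset.Icc (M-N2) N1, V1 h (M-h) =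
        ∑ k ∈ Finset.Icc (M-N1) N2, V1 (min (N1+1) (M-k)) k := by
      refine Finset.sum_nbij' (fun h => M-h) (fun k => M-k) ?_ ?_ ?_ ?_ ?_
      all_goals intro a ha; rw [Finset.mem_Icc] at ha
      · simp only [Finset.mem_Icc]; omega
      · simp only [Finset.mem_Icc]; omega
      · omega
      · omega
      · have : min (N1+1) (M-(M-a)) = a := by omega
        simp only [this]
    rw [this]
    refine Finset.sum_le_sum_of_subset_of_nonneg ?_ ?_
    · intro k; simp only [Finset.mem_Icc, Finset.mem_range]; omega
    · intro k hk hk'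
      simp only [Finset.mem_Icc, Finset.mem_range] at hk hk'
      rw [min_eq_left (by omega)]
      exact hnn1 k (by omega)
  have b2 : ∑ h ∈ Finset.Icc (M-N2) N1, V2 h (M-h) ≤
      ∑ h ∈ Finset.range (N1+1), V2 h (min (N2+1) (M-h)) := by
    have : ∑ h ∈ Finset.Icc (M-N2) N1, V2 h (M-h) =
        ∑ h ∈ Finset.Icc (M-N2) N1, V2 h (min (N2+1) (M-h)) := by
      refine Finset.sum_congr rfl fun h hh => ?_
      rw [Finset.mem_Icc] at hh
      rw [min_eq_right (by omega)]
    rw [this]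
    refine Finset.sum_le_sum_of_subset_of_nonneg ?_ ?_
    · intro k; simp only [Finset.mem_Icc, Finset.mem_range]; omega
    · intro k hk hk'
      simp only [Finset.mem_Icc, Finset.mem_range] at hk hk'
      rw [min_eq_left (by omega)]
      exact hnn2 k (by omega)
  rw [Finset.sum_add_distrib]
  linarith
end

section
/- Consider the controlled 2D Roesser system x⁺(h,k) = A(h,k)x(h,k) + B(h,k)u(h,k), where x⁺(h,k) = (x1(h+1,k), x2(h,k+1)), with A(h,k) partitioned into blocks A11, A12, A21, A22 and B(h,k) = [[B1(h,k)],[B2(h,k)]] partitioned compatibly. Suppose there exist a symmetric positive definite 2D matrix-valued sequence Q(h,k) = diag(Q1(h,k), Q2(h,k)) and a 2D matrix-valued sequence L(h,k) such that, with Q⁺(h,k) = diag(Q1(h+1,k), Q2(h,k+1)): (i) the block matrix [[−Q(h,k), Q(h,k)A(h,k)ᵀ + L(h,k)ᵀB(h,k)ᵀ], [A(h,k)Q(h,k) + B(h,k)L(h,k), −Q⁺(h,k)]] is negative definite for all (h,k) ∈ {0,…,N1}×{0,…,N2}; (ii) Γ(h,k)⁻¹ − Q(h,k) is positive definite for all (h,k)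 ∈ {0,…,N1}×{0,…,N2}; (iii) Q1(0,k) − R1(k)⁻¹ is positive semidefinite for all k ∈ {0,…,N2}; (iv) Q2(h,0) − R2(h)⁻¹ is positive semidefinite for all h ∈ {0,…,N1}. Then the state feedback law u(h,k) = K(h,k)x(h,k) with K(h,k) = L(h,k)Q(h,k)⁻¹ renders the closed-loop system x⁺(h,k) = (A(h,k) + B(h,k)K(h,k))x(h,k) finite-region stable with respect to ({0,…,N1}×{0,…,N2}, R(h,k), Γ(h,k)): every closed-loop solution with Σ_{k=0}^{N2} x1(0,k)ᵀ R1(k) x1(0,k) + Σ_{h=0}^{N1} x2(h,0)ᵀ R2(h) x2(h,0) ≤ 1 satisfies x1(h,k)ᵀ Γ1(h,k) x1(h,k) + x2(h,k)ᵀ Γ2(h,k) x2(h,k) < 1 for all (h,k) ∈ {0,…,N1}×{0,…,N2}. -/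
open Matrix

lemma aux_telescope (a b : ℕ → ℕ → ℝ) (N1 N2 : ℕ)
    (ha : ∀ h k, 0 ≤ a h k) (hb : ∀ h k, 0 ≤ b h k)
    (hs : ∀ h k, h ≤ N1 → k ≤ N2 → a (h+1) k + b h (k+1) ≤ a h k + b h k)
    (h k : ℕ) (hh : h ≤ N1) (hk : k ≤ N2) :
    a h k + b h k ≤ (∑ j ∈ Finset.range (N2+1), a 0 j) + ∑ i ∈ Finset.range (N1+1), b i 0 := by
  have row : ∀ h, h ≤ N1 → ∀ k, k ≤ N2 + 1 →
      (∑ j ∈ Finset.range k, a (h+1) j) + b h k ≤ (∑ j ∈ Finset.range k, a h j) + b h 0 := by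
    intro h hh k
    induction k with
    | zero => intro _; simp
    | succ k ih =>
      intro hk
      rw [Finset.sum_range_succ, Finset.sum_range_succ]
      have := ih (by omega)
      have := hs h k hh (by omega)
      linarith
  have col : ∀ h, h ≤ N1 →
      (∑ j ∈ Finset.range (k+1), a h j) ≤
        (∑ j ∈ Finset.range (k+1), a 0 j) + ∑ i ∈ Finset.range h, b i 0 := by
    intro h
    induction h with
    | zero => intro _; simp
    | succ h ih =>
      intro hh
      rw [Finset.sum_range_succ (fun i => b i 0)]
      have := ih (by omega)
      have := row h (by omega) (k+1) (by omega)
      have := hb h (k+1)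
      linarith
  have h1 := row h hh k (by omega)
  have h2 := col h hh
  rw [Finset.sum_range_succ] at h2
  have h3 : 0 ≤ ∑ j ∈ Finset.range k, a (h+1) j := Finset.sum_nonneg fun j _ => ha _ j
  have h4 : (∑ j ∈ Finset.range (k+1), a 0 j) ≤ ∑ j ∈ Finset.range (N2+1), a 0 j :=
    Finset.sum_le_sum_of_subset_of_nonneg (Finset.range_mono (by omega)) fun j _ _ => ha 0 j
  have h5 : (∑ j ∈ Finset.range (h+1), b j 0) ≤ ∑ j ∈ Finset.range (N1+1), b j 0 :=
    Finset.sum_le_sum_of_subset_of_nonneg (Finset.range_mono (by omega)) fun j _ _ => hb j 0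
  rw [Finset.sum_range_succ] at h5
  linarith

section
variable {n : Type*} [Fintype n] [DecidableEq n]

lemma aux_pos {M : Matrix n n ℝ} (hM : M.PosDef) {x : n → ℝ} (hx : x ≠ 0) :
    0 < x ⬝ᵥ (M *ᵥ x) := by
  simpa using hM.dotProduct_mulVec_pos hx

lemma aux_nonneg {M : Matrix n n ℝ} (hM : M.PosSemidef) (x : n → ℝ) :
    0 ≤ x ⬝ᵥ (M *ᵥ x) := by
  simpa using hM.dotProduct_mulVec_nonneg x

lemma aux_inv_mulVec {M : Matrix n n ℝ} (hM : M.PosDef) (x : n → ℝ) :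
    M *ᵥ (M⁻¹ *ᵥ x) = x := by
  rw [mulVec_mulVec, mul_nonsing_inv _ ((isUnit_iff_isUnit_det _).mp hM.isUnit), one_mulVec]

lemma aux_mulVec_inv {M : Matrix n n ℝ} (hM : M.PosDef) (x : n → ℝ) :
    M⁻¹ *ᵥ (M *ᵥ x) = x := by
  rw [mulVec_mulVec, nonsing_inv_mul _ ((isUnit_iff_isUnit_det _).mp hM.isUnit), one_mulVec]

lemma aux_symm {M : Matrix n n ℝ} (hM : M.PosDef) (x y : n → ℝ) :
    x ⬝ᵥ (M *ᵥ y) = y ⬝ᵥ (M *ᵥ x) := by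
  have h : Mᵀ = M := by simpa using hM.isHermitian.eq
  rw [dotProduct_mulVec, ← mulVec_transpose, h, dotProduct_comm]

lemma aux_young {M : Matrix n n ℝ} (hM : M.PosDef) (x y : n → ℝ) :
    2 * (x ⬝ᵥ y) ≤ x ⬝ᵥ (M *ᵥ x) + y ⬝ᵥ (M⁻¹ *ᵥ y) := by
  have h := aux_nonneg hM.posSemidef (x - M⁻¹ *ᵥ y)
  rw [mulVec_sub, aux_inv_mulVec hM, sub_dotProduct, dotProduct_sub, dotProduct_sub,
    aux_symm hM (M⁻¹ *ᵥ y) x, aux_inv_mulVec hM, dotProduct_comm (M⁻¹ *ᵥ y) y] at h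
  linarith

lemma aux_le {P M : Matrix n n ℝ} (hP : P.PosDef) (hM : M.PosDef)
    (h : (P - M⁻¹).PosSemidef) (x : n → ℝ) :
    x ⬝ᵥ (P⁻¹ *ᵥ x) ≤ x ⬝ᵥ (M *ᵥ x) := by
  have h1 := aux_young hM x (P⁻¹ *ᵥ x)
  have h2 := aux_nonneg h (P⁻¹ *ᵥ x)
  rw [sub_mulVec, dotProduct_sub, aux_inv_mulVec hP, dotProduct_comm _ x] at h2
  linarith

lemma aux_lt {G Q : Matrix n n ℝ} (hG : G.PosDef) (hQ : Q.PosDef)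
    (h : (G⁻¹ - Q).PosDef) {x : n → ℝ} (hx : x ≠ 0) :
    x ⬝ᵥ (G *ᵥ x) < x ⬝ᵥ (Q⁻¹ *ᵥ x) := by
  have h1 := aux_young hQ (G *ᵥ x) x
  have hne : G *ᵥ x ≠ 0 := by
    intro h0
    apply hx
    rw [← aux_mulVec_inv hG x, h0, mulVec_zero]
  have h2 := aux_pos h hne
  rw [sub_mulVec, dotProduct_sub, aux_mulVec_inv hG] at h2
  rw [dotProduct_comm (G *ᵥ x) x] at h1 h2
  linarith

lemma aux_step {Q Qp F : Matrix n n ℝ} (hQ : Q.PosDef) (hQp : Qp.PosDef)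
    (h : NegDef (Matrix.fromBlocks (-Q) Fᵀ F (-Qp))) (x xp : n → ℝ)
    (hx : xp = F *ᵥ (Q⁻¹ *ᵥ x)) :
    xp ⬝ᵥ (Qp⁻¹ *ᵥ xp) ≤ x ⬝ᵥ (Q⁻¹ *ᵥ x) := by
  set y := Q⁻¹ *ᵥ x with hy
  set z := Qp⁻¹ *ᵥ xp with hz
  have hle : Sum.elim y z ⬝ᵥ (Matrix.fromBlocks (-Q) Fᵀ F (-Qp) *ᵥ Sum.elim y z) ≤ 0 := by
    by_cases h0 : Sum.elim y z = 0
    · rw [h0]; simp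
    · exact (h _ h0).le
  have e1 : Q *ᵥ y = x := aux_inv_mulVec hQ x
  have e2 : Qp *ᵥ z = xp := aux_inv_mulVec hQp xp
  have e3 : y ⬝ᵥ (Fᵀ *ᵥ z) = z ⬝ᵥ xp := by
    rw [mulVec_transpose, dotProduct_comm, ← dotProduct_mulVec, hx]
  rw [fromBlocks_mulVec, sumElim_dotProduct_sumElim] at hle
  simp only [Sum.elim_comp_inl, Sum.elim_comp_inr, neg_mulVec, dotProduct_add, dotProduct_neg,
    e1, e2, e3, ← hx] at hle
  rw [dotProduct_comm y x, dotProduct_comm z xp] at hle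
  linarith
end

section
variable {p q : Type*} [Fintype p] [DecidableEq p] [Fintype q] [DecidableEq q]

lemma aux_quad (M : Matrix p p ℝ) (N : Matrix q q ℝ) (x : p → ℝ) (y : q → ℝ) :
    Sum.elim x y ⬝ᵥ (Matrix.fromBlocks M 0 0 N *ᵥ Sum.elim x y) =
      x ⬝ᵥ (M *ᵥ x) + y ⬝ᵥ (N *ᵥ y) := by
  rw [fromBlocks_mulVec, sumElim_dotProduct_sumElim]
  simp

lemma aux_block {M : Matrix p p ℝ} {N : Matrix q q ℝ} (hM : M.PosDef) (hN : N.PosDef) :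
    (Matrix.fromBlocks M 0 0 N).PosDef := by
  refine Matrix.PosDef.of_dotProduct_mulVec_pos ?_ ?_
  · exact Matrix.IsHermitian.fromBlocks hM.isHermitian (by simp) hN.isHermitian
  · intro v hv
    obtain ⟨x, y, rfl⟩ : ∃ x y, v = Sum.elim x y :=
      ⟨v ∘ Sum.inl, v ∘ Sum.inr, (Sum.elim_comp_inl_inr v).symm⟩
    rw [star_trivial, aux_quad]
    by_cases hx : x = 0
    · by_cases hy : y = 0
      · exfalso; apply hv; subst hx; subst hy; ext i; cases i <;> rfl
      · have := aux_pos hN hy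
        have := aux_nonneg hM.posSemidef x
        linarith
    · have := aux_pos hM hx
      have := aux_nonneg hN.posSemidef y
      linarith

lemma aux_block_inv {M : Matrix p p ℝ} {N : Matrix q q ℝ} (hM : M.PosDef) (hN : N.PosDef) :
    (Matrix.fromBlocks M 0 0 N)⁻¹ = Matrix.fromBlocks M⁻¹ 0 0 N⁻¹ := by
  apply inv_eq_right_inv
  rw [fromBlocks_multiply,
    mul_nonsing_inv _ ((isUnit_iff_isUnit_det _).mp hM.isUnit),
    mul_nonsing_inv _ ((isUnit_iff_isUnit_det _).mp hN.isUnit)]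
  simp
end

/-- **Finite-region stabilization via state feedback.** If there exist a symmetric
positive definite block-diagonal 2D matrix-valued sequence
`Q(h,k) = diag(Q1(h,k), Q2(h,k))` and a 2D matrix-valued sequence `L(h,k)` such that,
with `Q⁺(h,k) = diag(Q1(h+1,k), Q2(h,k+1))`,
(i) `[[−Q, QAᵀ + LᵀBᵀ], [AQ + BL, −Q⁺]] < 0` on `{0,…,N1}×{0,…,N2}`,
(ii) `Q(h,k) < Γ(h,k)⁻¹` on `{0,…,N1}×{0,…,N2}`,
(iii) `Q1(0,k) ≥ R1(k)⁻¹` for `k ∈ {0,…,N2}`,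
(iv) `Q2(h,0) ≥ R2(h)⁻¹` for `h ∈ {0,…,N1}`,
then the state feedback `u = K x` with `K(h,k) = L(h,k) Q(h,k)⁻¹` renders the
closed-loop Roesser system finite-region stable w.r.t.
`({0,…,N1}×{0,…,N2}, diag(R1,R2), diag(Γ1,Γ2))`. -/
theorem finite_region_stabilization
    {n1 n2 m N1 N2 : ℕ} (hN1pos : 0 < N1) (hN12 : N1 < N2)
    (A11 : ℕ → ℕ → Matrix (Fin n1) (Fin n1) ℝ)
    (A12 : ℕ → ℕ → Matrix (Fin n1) (Fin n2) ℝ)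
    (A21 : ℕ → ℕ → Matrix (Fin n2) (Fin n1) ℝ)
    (A22 : ℕ → ℕ → Matrix (Fin n2) (Fin n2) ℝ)
    (B1 : ℕ → ℕ → Matrix (Fin n1) (Fin m) ℝ)
    (B2 : ℕ → ℕ → Matrix (Fin n2) (Fin m) ℝ)
    (R1 : ℕ → Matrix (Fin n1) (Fin n1) ℝ)
    (R2 : ℕ → Matrix (Fin n2) (Fin n2) ℝ)
    (Γ1 : ℕ → ℕ → Matrix (Fin n1) (Fin n1) ℝ)
    (Γ2 : ℕ → ℕ → Matrix (Fin n2) (Fin n2) ℝ)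
    (hR1 : ∀ k, (R1 k).PosDef) (hR2 : ∀ h, (R2 h).PosDef)
    (hΓ1 : ∀ h k, (Γ1 h k).PosDef) (hΓ2 : ∀ h k, (Γ2 h k).PosDef)
    (hΓR : (Matrix.fromBlocks (R1 0 - Γ1 0 0) 0 0 (R2 0 - Γ2 0 0)).PosDef)
    (Q1 : ℕ → ℕ → Matrix (Fin n1) (Fin n1) ℝ)
    (Q2 : ℕ → ℕ → Matrix (Fin n2) (Fin n2) ℝ)
    (L : ℕ → ℕ → Matrix (Fin m) (Fin n1 ⊕ Fin n2) ℝ)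
    (hQ1 : ∀ h k, (Q1 h k).PosDef) (hQ2 : ∀ h k, (Q2 h k).PosDef)
    -- (i) the design DLMI
    (hLMI : ∀ h k, h ≤ N1 → k ≤ N2 →
      NegDef (Matrix.fromBlocks
        (-(Matrix.fromBlocks (Q1 h k) 0 0 (Q2 h k)))
        (Matrix.fromBlocks (Q1 h k) 0 0 (Q2 h k) *
            (Matrix.fromBlocks (A11 h k) (A12 h k) (A21 h k) (A22 h k))ᵀ +
          (L h k)ᵀ * (Matrix.fromRows (B1 h k) (B2 h k))ᵀ)
        (Matrix.fromBlocks (A11 h k) (A12 h k) (A21 h k) (A22 h k) *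
            Matrix.fromBlocks (Q1 h k) 0 0 (Q2 h k) +
          Matrix.fromRows (B1 h k) (B2 h k) * L h k)
        (-(Matrix.fromBlocks (Q1 (h+1) k) 0 0 (Q2 h (k+1))))))
    -- (ii) `Γ(h,k)⁻¹ − Q(h,k)` positive definite
    (hΓQ : ∀ h k, h ≤ N1 → k ≤ N2 →
      ((Matrix.fromBlocks (Γ1 h k) 0 0 (Γ2 h k))⁻¹ -
        Matrix.fromBlocks (Q1 h k) 0 0 (Q2 h k)).PosDef)
    -- (iii) `Q1(0,k) − R1(k)⁻¹` positive semidefinite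
    (hQR1 : ∀ k, k ≤ N2 → (Q1 0 k - (R1 k)⁻¹).PosSemidef)
    -- (iv) `Q2(h,0) − R2(h)⁻¹` positive semidefinite
    (hQR2 : ∀ h, h ≤ N1 → (Q2 h 0 - (R2 h)⁻¹).PosSemidef) :
    -- conclusion: the closed loop with `K(h,k) = L(h,k) Q(h,k)⁻¹` is FRS
    ∀ (x1 : ℕ → ℕ → Fin n1 → ℝ) (x2 : ℕ → ℕ → Fin n2 → ℝ),
      (∀ h k, Sum.elim (x1 (h+1) k) (x2 h (k+1)) =
        (Matrix.fromBlocks (A11 h k) (A12 h k) (A21 h k) (A22 h k) +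
          Matrix.fromRows (B1 h k) (B2 h k) *
            (L h k * (Matrix.fromBlocks (Q1 h k) 0 0 (Q2 h k))⁻¹)) *ᵥ
          Sum.elim (x1 h k) (x2 h k)) →
      (∑ k ∈ Finset.range (N2+1), x1 0 k ⬝ᵥ (R1 k *ᵥ x1 0 k)) +
        (∑ h ∈ Finset.range (N1+1), x2 h 0 ⬝ᵥ (R2 h *ᵥ x2 h 0)) ≤ 1 →
      ∀ h k, h ≤ N1 → k ≤ N2 →
        x1 h k ⬝ᵥ (Γ1 h k *ᵥ x1 h k) + x2 h k ⬝ᵥ (Γ2 h k *ᵥ x2 h k) < 1 := by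
  intro x1 x2 hsys hinit h k hh hk
  have hst : ∀ h k, h ≤ N1 → k ≤ N2 →
      x1 (h+1) k ⬝ᵥ ((Q1 (h+1) k)⁻¹ *ᵥ x1 (h+1) k) +
        x2 h (k+1) ⬝ᵥ ((Q2 h (k+1))⁻¹ *ᵥ x2 h (k+1)) ≤
      x1 h k ⬝ᵥ ((Q1 h k)⁻¹ *ᵥ x1 h k) + x2 h k ⬝ᵥ ((Q2 h k)⁻¹ *ᵥ x2 h k) := by
    intro h k hh hk
    have hQ := aux_block (hQ1 h k) (hQ2 h k)
    have hQp := aux_block (hQ1 (h+1) k) (hQ2 h (k+1))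
    have hL := hLMI h k hh hk
    have hT : (Matrix.fromBlocks (Q1 h k) 0 0 (Q2 h k))ᵀ =
        Matrix.fromBlocks (Q1 h k) 0 0 (Q2 h k) := by
      simpa only [conjTranspose_eq_transpose_of_trivial] using hQ.isHermitian.eq
    have hF : Matrix.fromBlocks (Q1 h k) 0 0 (Q2 h k) *
            (Matrix.fromBlocks (A11 h k) (A12 h k) (A21 h k) (A22 h k))ᵀ +
          (L h k)ᵀ * (Matrix.fromRows (B1 h k) (B2 h k))ᵀ =
        (Matrix.fromBlocks (A11 h k) (A12 h k) (A21 h k) (A22 h k) *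
            Matrix.fromBlocks (Q1 h k) 0 0 (Q2 h k) +
          Matrix.fromRows (B1 h k) (B2 h k) * L h k)ᵀ := by
      rw [transpose_add, transpose_mul, transpose_mul, hT]
    rw [hF] at hL
    have := aux_step hQ hQp hL (Sum.elim (x1 h k) (x2 h k))
      (Sum.elim (x1 (h+1) k) (x2 h (k+1))) (by
        rw [hsys h k, add_mulVec, add_mulVec, ← mulVec_mulVec _ _ (Matrix.fromBlocks (Q1 h k) 0 0 (Q2 h k)),
          aux_inv_mulVec hQ, ← Matrix.mul_assoc, mulVec_mulVec])
    rwa [aux_block_inv (hQ1 _ _) (hQ2 _ _), aux_block_inv (hQ1 _ _) (hQ2 _ _),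
      aux_quad, aux_quad] at this
  have hT := aux_telescope (fun h k => x1 h k ⬝ᵥ ((Q1 h k)⁻¹ *ᵥ x1 h k))
    (fun h k => x2 h k ⬝ᵥ ((Q2 h k)⁻¹ *ᵥ x2 h k)) N1 N2
    (fun h k => aux_nonneg (hQ1 h k).inv.posSemidef _)
    (fun h k => aux_nonneg (hQ2 h k).inv.posSemidef _) hst h k hh hk
  have hb1 : (∑ k ∈ Finset.range (N2+1), x1 0 k ⬝ᵥ ((Q1 0 k)⁻¹ *ᵥ x1 0 k)) ≤
      ∑ k ∈ Finset.range (N2+1), x1 0 k ⬝ᵥ (R1 k *ᵥ x1 0 k) :=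
    Finset.sum_le_sum fun j hj => aux_le (hQ1 0 j) (hR1 j)
      (hQR1 j (by have := Finset.mem_range.mp hj; omega)) _
  have hb2 : (∑ h ∈ Finset.range (N1+1), x2 h 0 ⬝ᵥ ((Q2 h 0)⁻¹ *ᵥ x2 h 0)) ≤
      ∑ h ∈ Finset.range (N1+1), x2 h 0 ⬝ᵥ (R2 h *ᵥ x2 h 0) :=
    Finset.sum_le_sum fun j hj => aux_le (hQ2 j 0) (hR2 j)
      (hQR2 j (by have := Finset.mem_range.mp hj; omega)) _
  rw [← aux_quad]
  by_cases h0 : Sum.elim (x1 h k) (x2 h k) = 0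
  · rw [h0]; simp
  · have := aux_lt (aux_block (hΓ1 h k) (hΓ2 h k)) (aux_block (hQ1 h k) (hQ2 h k))
      (hΓQ h k hh hk) h0
    rw [aux_block_inv (hQ1 _ _) (hQ2 _ _), aux_quad (Q1 h k)⁻¹] at this
    linarith
end
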